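/- For every p > 0 there is a constant C_p > 0 such that for every N ≥ 2, if U is an N × N random unitary matrix distributed according to Haar measure on U(N), then E[ (max_{1 ≤ k ≤ N} |𝒩_{2πk/N} − k|)^{2p} ] ≤ C_p (log N)^{2p}. -/

import Mathlib

open MeasureTheory Real Filter

noncomputable section

/-- The Borel σ-algebra on the unitary group `U(N)`. -/
instance (N : ℕ) : MeasurableSpace (Matrix.unitaryGroup (Fin N) ℂ) := borel _

instance (N : ℕ) : BorelSpace (Matrix.unitaryGroup (Fin N) ℂ) := ⟨rfl⟩

/-- The eigenvalue angles (in `[0, 2π)`, with multiplicity) of a unitary matrix `U`: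
the arguments of the roots of the characteristic polynomial, shifted to lie in `[0, 2π)`. -/
def eigenAngles (N : ℕ) (U : Matrix.unitaryGroup (Fin N) ℂ) : Multiset ℝ :=
  ((U : Matrix (Fin N) (Fin N) ℂ).charpoly.roots).map
    (fun z => if 0 ≤ Complex.arg z then Complex.arg z else Complex.arg z + 2 * π)

open Classical in
/-- `𝒩_A`: the number of eigenvalue angles of `U` lying in the set `A`. -/
def countAngles (N : ℕ) (U : Matrix.unitaryGroup (Fin N) ℂ) (A : Set ℝ) : ℕ :=
  Multiset.card ((eigenAngles N U).filter (· ∈ A))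

/-- `𝒩_θ`: the number of eigenvalue angles of `U` in `[0, θ]`. -/
def countFun (N : ℕ) (U : Matrix.unitaryGroup (Fin N) ℂ) (θ : ℝ) : ℕ :=
  countAngles N U (Set.Icc 0 θ)

/-- The Kolmogorov distance between the empirical spectral measure of `U` and the
uniform measure on the circle: `sup_{0 ≤ θ < 2π} |𝒩_θ/N - θ/(2π)|`. -/
def dK (N : ℕ) (U : Matrix.unitaryGroup (Fin N) ℂ) : ℝ :=
  ⨆ θ : Set.Ico (0:ℝ) (2 * π), |(countFun N U θ : ℝ) / N - (θ : ℝ) / (2 * π)|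

/-- `max_{1 ≤ k ≤ N} |𝒩_{2πk/N} - k|`. -/
def maxDev (N : ℕ) (U : Matrix.unitaryGroup (Fin N) ℂ) : ℝ :=
  ⨆ k : (Finset.Icc 1 N : Finset ℕ), |(countFun N U (2 * π * (k : ℕ) / N) : ℝ) - ((k : ℕ) : ℝ)|

end

section GroupFacts

instance instSecondCountableUnitary (n : ℕ) :
    SecondCountableTopology (Matrix.unitaryGroup (Fin n) ℂ) := by
  have : SecondCountableTopology (Matrix (Fin n) (Fin n) ℂ) :=
    inferInstanceAs (SecondCountableTopology (Fin n → Fin n → ℂ))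
  exact TopologicalSpace.Subtype.secondCountableTopology _

instance instCompactUnitary (n : ℕ) : CompactSpace (Matrix.unitaryGroup (Fin n) ℂ) := by
  apply isCompact_iff_compactSpace.mp
  have hK : IsCompact (Set.pi Set.univ (fun _ : Fin n => Set.pi Set.univ
      (fun _ : Fin n => Metric.closedBall (0 : ℂ) 1))) :=
    isCompact_univ_pi fun _ => isCompact_univ_pi fun _ => isCompact_closedBall _ _
  refine IsCompact.of_isClosed_subset (X := Matrix (Fin n) (Fin n) ℂ) hK ?_ ?_
  · have : ((Matrix.unitaryGroup (Fin n) ℂ : Set (Matrix (Fin n) (Fin n) ℂ))) =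
        {A | A * star A = 1} := by
      ext A; exact Matrix.mem_unitaryGroup_iff
    rw [this]
    exact isClosed_eq (continuous_id.mul continuous_star) continuous_const
  · intro A hA
    intro i _ j _
    simpa using entry_norm_bound_of_unitary hA i j

lemma haar_right_inv {n : ℕ} (μ : Measure (Matrix.unitaryGroup (Fin n) ℂ))
    [IsProbabilityMeasure μ] [μ.IsHaarMeasure] : μ.IsMulRightInvariant := by
  constructor
  intro g
  have : IsProbabilityMeasure (Measure.map (fun x => x * g) μ) :=
    Measure.isProbabilityMeasure_map (by fun_prop)
  exact Measure.isHaarMeasure_eq_of_isProbabilityMeasure _ _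

lemma exists_haar (n : ℕ) : ∃ μ : Measure (Matrix.unitaryGroup (Fin n) ℂ),
    IsProbabilityMeasure μ ∧ μ.IsHaarMeasure := by
  refine ⟨Measure.haarMeasure ⊤, ⟨?_⟩, inferInstance⟩
  simpa using Measure.haarMeasure_self (G := Matrix.unitaryGroup (Fin n) ℂ)
    (K₀ := (⊤ : TopologicalSpace.PositiveCompacts _))

end GroupFacts


section Roots

open Polynomial

abbrev UG (n : ℕ) := Matrix.unitaryGroup (Fin n) ℂ
abbrev Mt (n : ℕ) := Matrix (Fin n) (Fin n) ℂ

/-- multiset of eigenvalues -/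
noncomputable def evs {n : ℕ} (A : Mt n) : Multiset ℂ := A.charpoly.roots

lemma card_evs {n : ℕ} (A : Mt n) : Multiset.card (evs A) = n := by
  have := (IsAlgClosed.splits A.charpoly).natDegree_eq_card_roots
  rw [Matrix.charpoly_natDegree_eq_dim] at this
  simpa [evs] using this.symm

lemma charpoly_eq_prod {n : ℕ} (A : Mt n) :
    A.charpoly = ((evs A).map (fun z => X - C z)).prod :=
  (IsAlgClosed.splits A.charpoly).eq_prod_roots_of_monic (Matrix.charpoly_monic A)

lemma scalar_eq_smul {n : ℕ} (t : ℂ) : Matrix.scalar (Fin n) t = t • (1 : Mt n) := by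
  rw [Matrix.smul_one_eq_diagonal]; rfl

lemma det_sub_eq {n : ℕ} (A : Mt n) (t : ℂ) :
    (t • (1 : Mt n) - A).det = ((evs A).map (fun z => t - z)).prod := by
  have h := Matrix.eval_charpoly A t
  rw [charpoly_eq_prod A, eval_multiset_prod, Multiset.map_map, scalar_eq_smul] at h
  rw [← h]
  simp

lemma pow_mul_prod {s : Multiset ℂ} {n : ℕ} (h : Multiset.card s = n) (c : ℂ) (f : ℂ → ℂ) :
    c ^ n * (s.map f).prod = (s.map (fun z => c * f z)).prod := by
  rw [Multiset.prod_map_mul, Multiset.map_const', Multiset.prod_replicate, h]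

lemma det_one_sub_smul {n : ℕ} (A : Mt n) (s : ℂ) :
    ((1 : Mt n) - s • A).det = ((evs A).map (fun z => 1 - s * z)).prod := by
  by_cases hs : s = 0
  · simp [hs]
  have h1 : (1 : Mt n) - s • A = s • (s⁻¹ • (1 : Mt n) - A) := by
    rw [smul_sub, smul_smul, mul_inv_cancel₀ hs, one_smul]
  rw [h1, Matrix.det_smul, det_sub_eq, Fintype.card_fin, pow_mul_prod (card_evs A)]
  congr 1
  apply Multiset.map_congr rfl
  intro z _
  field_simp

lemma evs_of_det {n : ℕ} (A : Mt n) (s : Multiset ℂ)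
    (h : ∀ t : ℂ, (t • (1 : Mt n) - A).det = (s.map (fun z => t - z)).prod) : evs A = s := by
  have : A.charpoly = (s.map (fun z => X - C z)).prod := by
    apply Polynomial.funext
    intro t
    rw [Matrix.eval_charpoly, eval_multiset_prod, Multiset.map_map, scalar_eq_smul, h]
    simp
  rw [evs, this, roots_multiset_prod_X_sub_C]

lemma evs_smul {n : ℕ} (A : Mt n) (c : ℂ) (hc : c ≠ 0) :
    evs (c • A) = (evs A).map (fun z => c * z) := by
  apply evs_of_det
  intro t
  have h1 : t • (1 : Mt n) - c • A = c • ((c⁻¹ * t) • (1 : Mt n) - A) := by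
    rw [smul_sub, smul_smul, mul_inv_cancel_left₀ hc]
  rw [h1, Matrix.det_smul, det_sub_eq, Fintype.card_fin, Multiset.map_map,
    pow_mul_prod (card_evs A)]
  congr 1
  apply Multiset.map_congr rfl
  intro z _
  simp only [Function.comp]
  field_simp

open scoped Matrix.Norms.L2Operator in
lemma norm_evs {n : ℕ} (U : UG n) {z : ℂ} (hz : z ∈ evs (U : Mt n)) : ‖z‖ = 1 := by
  refine spectrum.norm_eq_one_of_unitary (𝕜 := ℂ) U.2 ?_
  rw [Matrix.mem_spectrum_iff_isRoot_charpoly]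
  exact Polynomial.isRoot_of_mem_roots hz

lemma re_pos_of {z : ℂ} (hz : ‖z‖ = 1) {r : ℝ} (h0 : 0 ≤ r) (h1 : r < 1) :
    0 < (1 - (r : ℂ) * z).re := by
  have : z.re ≤ 1 := hz ▸ Complex.re_le_norm z
  simp
  nlinarith

lemma re_pos_one {z : ℂ} (hz : ‖z‖ = 1) (h1 : z ≠ 1) :
    0 < (1 - z).re := by
  have h2 : z.re ≤ 1 := hz ▸ Complex.re_le_norm z
  rcases h2.lt_or_eq with h | h
  · simpa using h
  · exfalso
    apply h1
    have := Complex.sq_norm z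
    rw [hz, Complex.normSq_apply, h] at this
    apply Complex.ext <;> simp [h]
    nlinarith

/-- regularised argument sum -/
noncomputable def Lr {n : ℕ} (r : ℝ) (A : Mt n) : ℝ :=
  ((evs A).map (fun z => Complex.arg (1 - r * z))).sum

/-- complex log version -/
noncomputable def Lc {n : ℕ} (r : ℝ) (A : Mt n) : ℂ :=
  ((evs A).map (fun z => Complex.log (1 - r * z))).sum

lemma Lc_im {n : ℕ} (r : ℝ) (A : Mt n) : (Lc r A).im = Lr r A := by
  unfold Lc Lr
  have := map_multiset_sum Complex.imAddGroupHom ((evs A).map (fun z => Complex.log (1 - r * z)))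
  simpa [Multiset.map_map, Complex.log_im] using this

lemma exp_Lc {n : ℕ} (r : ℝ) (U : UG n) (h0 : 0 ≤ r) (h1 : r < 1) :
    Complex.exp (Lc r (U : Mt n)) = ((1 : Mt n) - (r : ℂ) • (U : Mt n)).det := by
  rw [det_one_sub_smul, Lc, Complex.exp_multiset_sum, Multiset.map_map]
  congr 1
  apply Multiset.map_congr rfl
  intro z hz
  apply Complex.exp_log
  intro h
  have := re_pos_of (norm_evs U hz) h0 h1
  rw [h] at this
  simp at this

lemma Lr_cont {n : ℕ} (U : UG n) : ContinuousOn (fun r : ℝ => Lr r (U : Mt n)) (Set.Ico 0 1) := by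
  intro r hr
  apply ContinuousAt.continuousWithinAt
  unfold Lr
  apply tendsto_multiset_sum
  intro z hz
  have : ContinuousAt (fun r : ℝ => 1 - (r : ℂ) * z) r := by fun_prop
  exact ContinuousAt.comp (g := Complex.arg)
    (Complex.continuousAt_arg (Or.inl (re_pos_of (norm_evs U hz) hr.1 hr.2))) this

lemma Lr_tendsto {n : ℕ} (U : UG n) :
    Tendsto (fun r : ℝ => Lr r (U : Mt n)) (nhdsWithin 1 (Set.Iio 1)) (nhds (Lr 1 (U : Mt n))) := by
  unfold Lr
  apply tendsto_multiset_sum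
  intro z hz
  by_cases h : z = 1
  · subst h
    simp only [mul_one, Complex.ofReal_one, sub_self, Complex.arg_zero]
    apply tendsto_const_nhds.congr'
    filter_upwards [self_mem_nhdsWithin] with r hr
    symm
    rw [← Complex.ofReal_one, ← Complex.ofReal_sub]
    apply Complex.arg_ofReal_of_nonneg
    simp at hr; linarith
  · have : ContinuousAt (fun r : ℝ => 1 - (r : ℂ) * z) 1 := by fun_prop
    have h2 := re_pos_one (norm_evs U hz) h
    exact (ContinuousAt.comp (g := Complex.arg)
      (Complex.continuousAt_arg (Or.inl (by simpa using h2))) this).mono_left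
      nhdsWithin_le_nhds

lemma Lr_zero {n : ℕ} (A : Mt n) : Lr 0 A = 0 := by
  simp [Lr]

lemma Lr_one_bound {n : ℕ} (U : UG n) : |Lr 1 (U : Mt n)| ≤ n * π := by
  unfold Lr
  have : ∀ s : Multiset ℂ, |(s.map (fun z => Complex.arg (1 - (1:ℝ) * z))).sum| ≤
      Multiset.card s * π := by
    intro s
    induction s using Multiset.induction with
    | empty => simp
    | cons a s ih =>
      simp only [Multiset.map_cons, Multiset.sum_cons, Multiset.card_cons]
      have := Complex.abs_arg_le_pi (1 - (1:ℝ) * a)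
      have h2 := abs_add_le (Complex.arg (1 - (1:ℝ) * a))
        (s.map (fun z => Complex.arg (1 - (1:ℝ) * z))).sum
      push_cast
      push_cast at *
      linarith
  simpa [card_evs] using this (evs (U : Mt n))

end Roots


section Meas

lemma Lc_hasDeriv {n : ℕ} (U : UG n) {r : ℝ} (h0 : 0 ≤ r) (h1 : r < 1) :
    HasDerivAt (fun s : ℝ => Lc s (U : Mt n))
      (((evs (U : Mt n)).map (fun z : ℂ => -z / (1 - (r : ℂ) * z))).sum) r := by
  unfold Lc
  have : ∀ s : Multiset ℂ, (∀ z ∈ s, ‖z‖ = 1) →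
      HasDerivAt (fun t : ℝ => (s.map (fun z => Complex.log (1 - t * z))).sum)
      ((s.map (fun z : ℂ => -z / (1 - (r : ℂ) * z))).sum) r := by
    intro s
    induction s using Multiset.induction with
    | empty => intro _; simpa using hasDerivAt_const r (0 : ℂ)
    | cons a s ih =>
      intro hs
      simp only [Multiset.map_cons, Multiset.sum_cons]
      apply HasDerivAt.add _ (ih fun z hz => hs z (Multiset.mem_cons_of_mem hz))
      have h2 : HasDerivAt (fun t : ℝ => 1 - (t : ℂ) * a) (-a) r := by
        have := ((hasDerivAt_id r).ofReal_comp.mul_const a).const_sub 1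
        simpa using this
      exact h2.clog_real (Or.inl (re_pos_of (hs a (Multiset.mem_cons_self a s)) h0 h1))
  exact this _ fun z hz => norm_evs U hz

/-- the logarithmic derivative of `det (1 - s U)` -/
noncomputable def pU {n : ℕ} (U : UG n) (s : ℝ) : ℂ := ((1 : Mt n) - (s : ℂ) • (U : Mt n)).det

lemma pU_cont {n : ℕ} : Continuous (Function.uncurry (pU (n := n))) := by
  unfold pU Function.uncurry
  apply Continuous.matrix_det
  fun_prop

lemma Lc_eq_integral {n : ℕ} (U : UG n) {r : ℝ} (h0 : 0 ≤ r) (h1 : r < 1) :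
    Lc r (U : Mt n) = ∫ s in (0 : ℝ)..r, deriv (pU U) s / pU U s := by
  have hcont : ContinuousOn (fun s : ℝ => ((evs (U : Mt n)).map (fun z : ℂ => -z / (1 - (s : ℂ) * z))).sum)
      (Set.Icc 0 r) := by
    intro s hs
    apply ContinuousAt.continuousWithinAt
    apply tendsto_multiset_sum
    intro z hz
    have hne : (1 - (s : ℂ) * z) ≠ 0 := by
      intro h
      have := re_pos_of (norm_evs U hz) hs.1 (hs.2.trans_lt h1)
      rw [h] at this
      simp at this
    have : ContinuousAt (fun s : ℝ => -z / (1 - (s : ℂ) * z)) s := by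
      fun_prop (disch := assumption)
    exact this
  have hFTC := intervalIntegral.integral_eq_sub_of_hasDerivAt (a := 0) (b := r)
    (f := fun s : ℝ => Lc s (U : Mt n))
    (f' := fun s : ℝ => ((evs (U : Mt n)).map (fun z : ℂ => -z / (1 - (s : ℂ) * z))).sum)
    (fun s hs => by
      rw [Set.uIcc_of_le h0] at hs
      exact Lc_hasDeriv U hs.1 (hs.2.trans_lt h1))
    (by
      apply ContinuousOn.intervalIntegrable
      rwa [Set.uIcc_of_le h0])
  have hz : Lc 0 (U : Mt n) = 0 := by simp [Lc]
  simp only [hz, sub_zero] at hFTC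
  rw [← hFTC]
  rw [intervalIntegral.integral_of_le h0, intervalIntegral.integral_of_le h0,
    integral_Ioc_eq_integral_Ioo, integral_Ioc_eq_integral_Ioo]
  apply setIntegral_congr_fun measurableSet_Ioo
  intro s hs
  have hs1 : s < 1 := hs.2.trans h1
  have hev : pU U =ᶠ[nhds s] fun t : ℝ => Complex.exp (Lc t (U : Mt n)) := by
    filter_upwards [Ioo_mem_nhds hs.1 hs1] with t ht
    rw [exp_Lc t U ht.1.le ht.2, pU]
  have hd := (Lc_hasDeriv U hs.1.le hs1).cexp
  have hd2 := hd.congr_of_eventuallyEq hev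
  simp only
  rw [hd2.deriv, hev.eq_of_nhds]
  rw [mul_div_cancel_left₀ _ (Complex.exp_ne_zero _)]

lemma measurable_Lr_one {n : ℕ} : Measurable (fun U : UG n => Lr 1 (U : Mt n)) := by
  have hr : ∀ k : ℕ, Measurable (fun U : UG n => Lr (1 - 1 / ((k : ℝ) + 1)) (U : Mt n)) := by
    intro k
    have h0 : (0 : ℝ) ≤ 1 - 1 / ((k : ℝ) + 1) := by
      rw [sub_nonneg, div_le_one (by positivity)]; linarith [Nat.cast_nonneg (α := ℝ) k]
    have h1 : 1 - 1 / ((k : ℝ) + 1) < 1 := by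
      have : 0 < 1 / ((k : ℝ) + 1) := by positivity
      linarith
    simp_rw [← Lc_im, fun U : UG n => Lc_eq_integral U h0 h1]
    simp_rw [intervalIntegral.integral_of_le h0]
    apply Complex.measurable_im.comp
    have hm : Measurable (fun q : UG n × ℝ => deriv (pU q.1) q.2 / pU q.1 q.2) :=
      (measurable_deriv_with_param pU_cont).div pU_cont.measurable
    exact (hm.stronglyMeasurable.integral_prod_right).measurable
  refine measurable_of_tendsto_metrizable hr ?_
  rw [tendsto_pi_nhds]
  intro U
  apply (Lr_tendsto U).comp
  rw [tendsto_nhdsWithin_iff]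
  constructor
  · have := (tendsto_one_div_add_atTop_nhds_zero_nat (𝕜 := ℝ)).const_sub 1
    simpa using this
  · filter_upwards with k
    have : 0 < 1 / ((k : ℝ) + 1) := by positivity
    simp only [Set.mem_Iio]
    linarith

end Meas


section Branch

open Matrix
open scoped ComplexOrder

lemma det_ne_zero_of {n : ℕ} (U : UG n) {r : ℝ} (h0 : 0 ≤ r) (h1 : r < 1) :
    ((1 : Mt n) - (r : ℂ) • (U : Mt n)).det ≠ 0 := by
  rw [← exp_Lc r U h0 h1]; exact Complex.exp_ne_zero _

lemma ratio_re_pos {n : ℕ} (U W : UG n) (x : Fin n → ℂ) (c : ℂ) (hc : 0 < c.re)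
    (hx : star x ⬝ᵥ x = 2 * (c.re : ℂ))
    (hU : (U : Mt n) = (1 - c⁻¹ • vecMulVec x (star x)) * (W : Mt n))
    {r : ℝ} (h0 : 0 ≤ r) (h1 : r < 1) :
    0 < (c * ((1 : Mt n) - (r : ℂ) • (U : Mt n)).det /
      ((1 : Mt n) - (r : ℂ) • (W : Mt n)).det).re := by
  have hc0 : c ≠ 0 := by rintro rfl; simp at hc
  set A : Mt n := (1 : Mt n) - (r : ℂ) • (W : Mt n) with hA
  have hdet : A.det ≠ 0 := det_ne_zero_of W h0 h1
  set y : Fin n → ℂ := A⁻¹ *ᵥ x with hy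
  have hAy : A *ᵥ y = x := by
    rw [hy, mulVec_mulVec, Matrix.mul_nonsing_inv _ (Ne.isUnit hdet), one_mulVec]
  set w : Fin n → ℂ := (r : ℂ) • ((W : Mt n) *ᵥ y) with hw
  have hxy : x = y - w := by
    rw [← hAy, hA, sub_mulVec, one_mulVec, smul_mulVec]
  have hfact : (1 : Mt n) - (r : ℂ) • (U : Mt n) =
      A * (1 + vecMulVec y (((r : ℂ) * c⁻¹) • (star x ᵥ* (W : Mt n)))) := by
    rw [Matrix.mul_add, Matrix.mul_one, mul_vecMulVec, hAy, hU, Matrix.sub_mul, Matrix.one_mul,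
      smul_mul, vecMulVec_mul, vecMulVec_smul, smul_sub, smul_smul, hA]
    abel
  have hdet2 : ((1 : Mt n) - (r : ℂ) • (U : Mt n)).det =
      A.det * (1 + c⁻¹ * (star x ⬝ᵥ w)) := by
    rw [hfact, det_mul, vecMulVec_eq Unit, det_one_add_replicateCol_mul_replicateRow]
    rw [smul_dotProduct, ← dotProduct_mulVec, hw, dotProduct_smul]
    simp only [smul_eq_mul]
    ring
  have hb : c * ((1 : Mt n) - (r : ℂ) • (U : Mt n)).det / A.det = c + star x ⬝ᵥ w := by
    rw [hdet2]; field_simp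
  rw [hb]
  have hww : star w ⬝ᵥ w = (r : ℂ) ^ 2 * (star y ⬝ᵥ y) := by
    rw [hw, star_smul, smul_dotProduct, dotProduct_smul, star_mulVec, dotProduct_mulVec,
      vecMul_vecMul]
    have : (W : Mt n)ᴴ * (W : Mt n) = 1 := Matrix.mem_unitaryGroup_iff'.mp W.2
    rw [this, vecMul_one]
    simp
    ring
  have hyw : (star w ⬝ᵥ y).re = (star y ⬝ᵥ w).re := by
    have : star w ⬝ᵥ y = star (star y ⬝ᵥ w) := star_dotProduct _ _
    rw [this]; simp
  have hy0 : y ≠ 0 := by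
    intro h
    rw [h, mulVec_zero] at hAy
    rw [← hAy] at hx
    simp at hx
    have : c.re = 0 := by exact_mod_cast hx
    linarith
  have hypos : 0 < (star y ⬝ᵥ y).re := by
    have := (Matrix.dotProduct_star_self_pos_iff (v := y)).mpr hy0
    have h2 := (Complex.lt_def.mp this).1
    simpa using h2
  have hx2 : (star x ⬝ᵥ x).re = 2 * c.re := by rw [hx]; simp
  have hwre : (star w ⬝ᵥ w).re = r ^ 2 * (star y ⬝ᵥ y).re := by
    rw [hww, ← Complex.ofReal_pow, Complex.re_ofReal_mul]
  rw [hxy] at hx2 ⊢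
  simp only [star_sub, sub_dotProduct, dotProduct_sub, Complex.add_re, Complex.sub_re] at hx2 ⊢
  have hr : r ^ 2 < 1 := by nlinarith
  have := mul_lt_mul_of_pos_right hr hypos
  linarith

lemma branch {n : ℕ} (U W : UG n) (x : Fin n → ℂ) (c : ℂ) (hc : 0 < c.re)
    (hx : star x ⬝ᵥ x = 2 * (c.re : ℂ))
    (hU : (U : Mt n) = (1 - c⁻¹ • vecMulVec x (star x)) * (W : Mt n))
    {r : ℝ} (h0 : 0 ≤ r) (h1 : r < 1) :
    Lr r (U : Mt n) - Lr r (W : Mt n) =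
      Complex.arg (c * ((1 : Mt n) - (r : ℂ) • (U : Mt n)).det /
      ((1 : Mt n) - (r : ℂ) • (W : Mt n)).det) - Complex.arg c := by
  have hc0 : c ≠ 0 := by rintro rfl; simp at hc
  set b : ℝ → ℂ := fun r => c * ((1 : Mt n) - (r : ℂ) • (U : Mt n)).det /
      ((1 : Mt n) - (r : ℂ) • (W : Mt n)).det with hb
  have hbpos : ∀ s ∈ Set.Ico (0:ℝ) 1, 0 < (b s).re := fun s hs =>
    ratio_re_pos U W x c hc hx hU hs.1 hs.2
  have hdc : ∀ V : UG n, Continuous fun s : ℝ => ((1 : Mt n) - (s : ℂ) • (V : Mt n)).det := by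
    intro V
    apply Continuous.matrix_det
    fun_prop
  have hbc : ContinuousOn b (Set.Ico 0 1) := by
    apply ContinuousOn.div
    · exact (continuous_const.mul (hdc U)).continuousOn
    · exact (hdc W).continuousOn
    · intro s hs; exact det_ne_zero_of W hs.1 hs.2
  have hac : ContinuousOn (fun s => Complex.arg (b s)) (Set.Ico 0 1) := by
    intro s hs
    exact ContinuousAt.comp_continuousWithinAt
      (Complex.continuousAt_arg (Or.inl (hbpos s hs))) (hbc s hs)
  set f : ℝ → ℝ := fun s => Lr s (U : Mt n) - Lr s (W : Mt n) - Complex.arg (b s) + Complex.arg c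
    with hf
  have hfc : ContinuousOn f (Set.Ico 0 1) :=
    (((Lr_cont U).sub (Lr_cont W)).sub hac).add continuousOn_const
  have hf0 : f 0 = 0 := by
    simp [hf, hb, Lr_zero]
  have hexp : ∀ s ∈ Set.Ico (0:ℝ) 1, Complex.exp (f s * Complex.I) = 1 := by
    intro s hs
    have hbs : b s ≠ 0 := by
      intro h; have := hbpos s hs; rw [h] at this; simp at this
    have h3 : Complex.exp (Lc s (U : Mt n) - Lc s (W : Mt n) - Complex.log (b s) + Complex.log c)
        = 1 := by
      rw [Complex.exp_add, Complex.exp_sub, Complex.exp_sub, exp_Lc s U hs.1 hs.2,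
        exp_Lc s W hs.1 hs.2, Complex.exp_log hbs, Complex.exp_log hc0]
      have := det_ne_zero_of W hs.1 hs.2
      have := det_ne_zero_of U hs.1 hs.2
      simp only [hb]
      field_simp
    obtain ⟨k, hk⟩ := Complex.exp_eq_one_iff.mp h3
    have him := congrArg Complex.im hk
    rw [Complex.exp_eq_one_iff]
    refine ⟨k, ?_⟩
    have : f s = k * (2 * π) := by
      simp [Lc_im, Complex.log_im] at him
      simp only [hf]
      linarith
    rw [this]; push_cast; ring
  suffices h : f r = 0 by
    simp only [hf] at h
    linarith
  have hsub : Set.Icc 0 r ⊆ Set.Ico (0:ℝ) 1 := fun s hs => ⟨hs.1, hs.2.trans_lt h1⟩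
  by_contra hne
  obtain ⟨k, hk⟩ := Complex.exp_eq_one_iff.mp (hexp r ⟨h0, h1⟩)
  have hk2 : f r = k * (2 * π) := by
    have := congrArg Complex.im hk
    simpa using this
  have hk0 : k ≠ 0 := by rintro rfl; simp at hk2; exact hne hk2
  have hbad : ∃ s ∈ Set.Icc 0 r, f s = π ∨ f s = -π := by
    rcases lt_or_gt_of_ne hk0 with hlt | hgt
    · have hk3 : (k : ℝ) ≤ -1 := by exact_mod_cast Int.le_sub_one_of_lt hlt
      have := intermediate_value_Icc' h0 (hfc.mono hsub)
      obtain ⟨s, hs, hs2⟩ := this (show -π ∈ Set.Icc (f r) (f 0) by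
        rw [hf0, hk2]; constructor <;> nlinarith [Real.pi_pos])
      exact ⟨s, hs, Or.inr hs2⟩
    · have hk3 : (1 : ℝ) ≤ k := by exact_mod_cast hgt
      have := intermediate_value_Icc h0 (hfc.mono hsub)
      obtain ⟨s, hs, hs2⟩ := this (show π ∈ Set.Icc (f 0) (f r) by
        rw [hf0, hk2]; constructor <;> nlinarith [Real.pi_pos])
      exact ⟨s, hs, Or.inl hs2⟩
  obtain ⟨s, hs, h | h⟩ := hbad
  · have := hexp s (hsub hs)
    rw [h, Complex.exp_pi_mul_I] at this
    norm_num at this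
  · have := hexp s (hsub hs)
    rw [h] at this
    push_cast at this
    rw [neg_mul, Complex.exp_neg, Complex.exp_pi_mul_I] at this
    norm_num at this

end Branch


section Embed

open Matrix
open scoped ComplexOrder

/-- block embedding `1 ⊕ V` -/
noncomputable def embM {n : ℕ} (V : Mt n) : Mt (n + 1) :=
  Matrix.of fun i j => Fin.cases (motive := fun _ => ℂ)
    (Fin.cases (motive := fun _ => ℂ) 1 (fun _ => 0) j)
    (fun i' => Fin.cases (motive := fun _ => ℂ) 0 (fun j' => V i' j') j) i

@[simp] lemma embM_zero_zero {n : ℕ} (V : Mt n) : embM V 0 0 = 1 := rfl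
@[simp] lemma embM_zero_succ {n : ℕ} (V : Mt n) (j : Fin n) : embM V 0 j.succ = 0 := rfl
@[simp] lemma embM_succ_zero {n : ℕ} (V : Mt n) (j : Fin n) : embM V j.succ 0 = 0 := rfl
@[simp] lemma embM_succ_succ {n : ℕ} (V : Mt n) (i j : Fin n) :
    embM V i.succ j.succ = V i j := rfl

lemma embM_mul {n : ℕ} (V W : Mt n) : embM (V * W) = embM V * embM W := by
  ext i j
  refine Fin.cases ?_ (fun i => ?_) i <;> refine Fin.cases ?_ (fun j => ?_) j <;>
    simp [Matrix.mul_apply, Fin.sum_univ_succ]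

lemma embM_one {n : ℕ} : embM (1 : Mt n) = 1 := by
  ext i j
  refine Fin.cases ?_ (fun i => ?_) i <;> refine Fin.cases ?_ (fun j => ?_) j <;>
    simp [Matrix.one_apply, (Fin.succ_ne_zero _).symm]

lemma embM_star {n : ℕ} (V : Mt n) : embM (star V) = star (embM V) := by
  ext i j
  refine Fin.cases ?_ (fun i => ?_) i <;> refine Fin.cases ?_ (fun j => ?_) j <;>
    simp [Matrix.star_apply]

/-- block embedding of the unitary groups -/
noncomputable def emb {n : ℕ} (V : UG n) : UG (n + 1) :=
  ⟨embM (V : Mt n), by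
    rw [Matrix.mem_unitaryGroup_iff, ← embM_star, ← embM_mul,
      Matrix.mem_unitaryGroup_iff.mp V.2, embM_one]⟩

@[simp] lemma emb_coe {n : ℕ} (V : UG n) : ((emb V : UG (n + 1)) : Mt (n + 1)) = embM (V : Mt n) :=
  rfl

lemma emb_mul {n : ℕ} (V W : UG n) : emb (V * W) = emb V * emb W := by
  apply Subtype.ext
  simp [embM_mul]

lemma continuous_emb {n : ℕ} : Continuous (emb (n := n)) := by
  apply Continuous.subtype_mk
  apply continuous_matrix
  intro i j
  refine Fin.cases ?_ (fun i => ?_) i <;> refine Fin.cases ?_ (fun j => ?_) j <;> simp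
  · exact continuous_const
  · exact continuous_const
  · exact continuous_const
  · exact (continuous_id.matrix_elem i j).comp continuous_subtype_val

lemma evs_emb {n : ℕ} (V : Mt n) : evs (embM V) = 1 ::ₘ evs V := by
  apply evs_of_det
  intro t
  rw [Multiset.map_cons, Multiset.prod_cons, ← det_sub_eq, det_succ_row_zero, Fin.sum_univ_succ]
  have h0 : ∀ j : Fin n, (t • (1 : Mt (n + 1)) - embM V) 0 j.succ = 0 := by
    intro j; simp [(Fin.succ_ne_zero j).symm]
  have hs : (t • (1 : Mt (n + 1)) - embM V).submatrix Fin.succ (Fin.succAbove 0) =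
      t • (1 : Mt n) - V := by
    ext i j
    simp [Matrix.one_apply]
  rw [hs]
  simp [h0]

lemma Lr_emb {n : ℕ} (V : Mt n) {r : ℝ} (h1 : r ≤ 1) : Lr r (embM V) = Lr r V := by
  unfold Lr
  rw [evs_emb, Multiset.map_cons, Multiset.sum_cons]
  have : Complex.arg (1 - (r : ℂ) * 1) = 0 := by
    rw [mul_one, ← Complex.ofReal_one, ← Complex.ofReal_sub]
    apply Complex.arg_ofReal_of_nonneg
    linarith
  rw [this, zero_add]

lemma exists_emb {n : ℕ} (A : UG (n + 1)) (h : ∀ i, (A : Mt (n + 1)) i 0 = if i = 0 then 1 else 0) :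
    ∃ W : UG n, A = emb W := by
  have hrow : ∀ j : Fin n, (A : Mt (n + 1)) 0 j.succ = 0 := by
    intro j
    have h1 : star (A : Mt (n + 1)) * (A : Mt (n + 1)) = 1 := Matrix.mem_unitaryGroup_iff'.mp A.2
    have h2 := congrFun (congrFun h1 j.succ) 0
    rw [Matrix.mul_apply] at h2
    simpa [h, Matrix.star_apply, Matrix.one_apply] using h2
  have hA : (A : Mt (n + 1)) = embM ((A : Mt (n + 1)).submatrix Fin.succ Fin.succ) := by
    ext i j
    refine Fin.cases ?_ (fun i => ?_) i <;> refine Fin.cases ?_ (fun j => ?_) j <;>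
      simp [h, hrow]
  have hW : (A : Mt (n + 1)).submatrix Fin.succ Fin.succ ∈ Matrix.unitaryGroup (Fin n) ℂ := by
    rw [Matrix.mem_unitaryGroup_iff]
    have h1 := Matrix.mem_unitaryGroup_iff.mp A.2
    rw [hA, ← embM_star, ← embM_mul] at h1
    ext i j
    have := congrFun (congrFun h1 i.succ) j.succ
    rw [embM_succ_succ] at this
    rw [this]
    simp [Matrix.one_apply]
  exact ⟨⟨_, hW⟩, Subtype.ext hA⟩

/-- Householder-type decomposition -/
lemma exists_decomp {n : ℕ} (U : UG (n + 1)) (hU : (U : Mt (n + 1)) 0 0 ≠ 1) :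
    ∃ (W : UG n) (x : Fin (n + 1) → ℂ) (c : ℂ), 0 < c.re ∧ star x ⬝ᵥ x = 2 * (c.re : ℂ) ∧
      c = 1 - star ((U : Mt (n + 1)) 0 0) ∧
      (∀ i, x i = (if i = 0 then 1 else 0) - (U : Mt (n + 1)) i 0) ∧
      (U : Mt (n + 1)) = (1 - c⁻¹ • vecMulVec x (star x)) * embM (W : Mt n) := by
  set x : Fin (n + 1) → ℂ := fun i => (if i = 0 then 1 else 0) - (U : Mt (n + 1)) i 0 with hx
  set a : ℂ := (U : Mt (n + 1)) 0 0 with ha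
  set c : ℂ := 1 - star a with hc
  have hc0 : c ≠ 0 := by
    intro h
    apply hU
    rw [hc, sub_eq_zero] at h
    have := congrArg star h
    simpa using this.symm
  have hcs : star c ≠ 0 := star_ne_zero.mpr hc0
  have hUU : star (U : Mt (n + 1)) * (U : Mt (n + 1)) = 1 := Matrix.mem_unitaryGroup_iff'.mp U.2
  have hnorm : ∑ i, star ((U : Mt (n + 1)) i 0) * (U : Mt (n + 1)) i 0 = 1 := by
    have := congrFun (congrFun hUU 0) 0
    rw [Matrix.mul_apply] at this
    simpa [Matrix.star_apply] using this
  have hxx : star x ⬝ᵥ x = c + star c := by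
    rw [Fin.sum_univ_succ] at hnorm
    simp only [dotProduct, Fin.sum_univ_succ, hx, Pi.star_apply, Fin.succ_ne_zero, if_true,
      if_false, star_sub, star_one, star_zero, zero_sub, neg_mul_neg, hc, star_star]
    rw [← ha] at hnorm ⊢
    linear_combination hnorm
  have hcc : c + star c = 2 * (c.re : ℂ) := by
    have := Complex.add_conj c
    simpa using this
  have hcre : 0 < c.re := by
    have hnb : ‖a‖ ≤ 1 := entry_norm_bound_of_unitary U.2 0 0
    have h2 : a.re ≤ 1 := (Complex.re_le_norm a).trans hnb
    rcases h2.lt_or_eq with h | h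
    · simpa [hc] using h
    · exfalso
      apply hU
      have h3 := Complex.sq_norm a
      rw [Complex.normSq_apply, h] at h3
      have h4 : a.im = 0 := by nlinarith [norm_nonneg a]
      apply Complex.ext <;> simp [h, h4]
  set H : Mt (n + 1) := 1 - c⁻¹ • vecMulVec x (star x) with hH
  have hHstar : star H = 1 - (star c)⁻¹ • vecMulVec x (star x) := by
    rw [hH, star_sub, star_one, star_smul, star_inv₀, Matrix.star_eq_conjTranspose,
      conjTranspose_vecMulVec, star_star]
  have hHH : H * star H = 1 := by
    rw [hHstar, hH, Matrix.sub_mul, Matrix.mul_sub, Matrix.one_mul, Matrix.one_mul,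
      Matrix.mul_sub, Matrix.mul_one, smul_mul_smul_comm, vecMulVec_mul_vecMulVec, hxx, vecMulVec_smul,
      smul_smul]
    have hco : c⁻¹ * (star c)⁻¹ * (c + star c) = c⁻¹ + (star c)⁻¹ := by
      field_simp
      ring
    rw [hco, add_smul]
    abel
  have hHmem : H ∈ Matrix.unitaryGroup (Fin (n + 1)) ℂ := Matrix.mem_unitaryGroup_iff.mpr hHH
  have hHH' : star H * H = 1 := Matrix.mem_unitaryGroup_iff'.mp hHmem
  have hcol : ∀ i, H i 0 = (U : Mt (n + 1)) i 0 := by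
    intro i
    simp only [hH, Matrix.sub_apply, Matrix.smul_apply, vecMulVec_apply, Pi.star_apply, smul_eq_mul,
      Matrix.one_apply]
    have hx0 : star (x 0) = c := by simp [hx, hc, ha]
    rw [hx0, mul_comm (x i), inv_mul_cancel_left₀ hc0]
    simp [hx]
  obtain ⟨W, hW⟩ := exists_emb ((⟨H, hHmem⟩ : UG (n + 1))⁻¹ * U) (by
    intro i
    have h1 : (((⟨H, hHmem⟩ : UG (n + 1))⁻¹ * U : UG (n + 1)) : Mt (n + 1)) =
      star H * (U : Mt (n + 1)) := rfl
    rw [h1, Matrix.mul_apply]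
    simp_rw [← hcol]
    rw [← Matrix.mul_apply, hHH', Matrix.one_apply])
  refine ⟨W, x, c, hcre, hxx.trans hcc, rfl, fun i => rfl, ?_⟩
  have h2 := congrArg (fun g : UG (n + 1) => (⟨H, hHmem⟩ : UG (n + 1)) * g) hW
  simp only [mul_inv_cancel_left] at h2
  have := congrArg (fun g : UG (n + 1) => (g : Mt (n + 1))) h2
  simpa using this

end Embed


section Ident

open Matrix

lemma det_ident {n : ℕ} (U : UG (n + 1)) (W : UG n) (x : Fin (n + 1) → ℂ) (c : ℂ)
    (hxU : ∀ i, x i = (if i = 0 then 1 else 0) - (U : Mt (n + 1)) i 0)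
    (hU : (U : Mt (n + 1)) = (1 - c⁻¹ • vecMulVec x (star x)) * embM (W : Mt n)) :
    ((1 : Mt (n + 1)) - (U : Mt (n + 1))).det =
      (1 - (U : Mt (n + 1)) 0 0) * ((1 : Mt n) - (W : Mt n)).det := by
  set M : Mt (n + 1) := Matrix.of fun i j =>
    if j = 0 then x i else ((1 : Mt (n + 1)) - embM (W : Mt n)) i j with hM
  set k : Fin (n + 1) → ℂ := fun j =>
    if j = 0 then 0 else c⁻¹ * (star x ᵥ* embM (W : Mt n)) j with hk
  have h1 : ((1 : Mt (n + 1)) - (U : Mt (n + 1))).det = M.det := by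
    rw [← det_transpose, ← det_transpose M]
    apply det_eq_of_forall_row_eq_smul_add_const k 0 (by simp [hk])
    intro j i
    simp only [transpose_apply]
    by_cases hj : j = 0
    · subst hj
      simp [hM, hk, hxU, Matrix.one_apply]
    · have h2 : (U : Mt (n + 1)) = embM (W : Mt n) -
          c⁻¹ • vecMulVec x (star x ᵥ* embM (W : Mt n)) := by
        rw [hU, Matrix.sub_mul, Matrix.one_mul, smul_mul, vecMulVec_mul]
      simp only [hM, hk, Matrix.of_apply, hj, if_true, if_false, Matrix.sub_apply]
      rw [h2]
      simp only [Matrix.sub_apply, Matrix.smul_apply, vecMulVec_apply, smul_eq_mul]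
      ring
  rw [h1, det_succ_row_zero, Fin.sum_univ_succ]
  have hs : M.submatrix Fin.succ (Fin.succAbove 0) = (1 : Mt n) - (W : Mt n) := by
    ext i j
    simp [hM, Matrix.one_apply]
  rw [hs]
  have h0 : ∀ j : Fin n, M 0 j.succ = 0 := by
    intro j; simp [hM, Matrix.one_apply, (Fin.succ_ne_zero j).symm]
  have h00 : M 0 0 = 1 - (U : Mt (n + 1)) 0 0 := by simp [hM, hxU]
  simp [h0, h00]

lemma S_ident {n : ℕ} (U : UG (n + 1)) (W : UG n) (x : Fin (n + 1) → ℂ) (c : ℂ)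
    (hc : 0 < c.re) (hx : star x ⬝ᵥ x = 2 * (c.re : ℂ))
    (hcU : c = 1 - star ((U : Mt (n + 1)) 0 0))
    (hxU : ∀ i, x i = (if i = 0 then 1 else 0) - (U : Mt (n + 1)) i 0)
    (hU : (U : Mt (n + 1)) = (1 - c⁻¹ • vecMulVec x (star x)) * embM (W : Mt n))
    (hW : ((1 : Mt n) - (W : Mt n)).det ≠ 0) :
    Lr 1 (U : Mt (n + 1)) = Lr 1 (W : Mt n) + Complex.arg (1 - (U : Mt (n + 1)) 0 0) := by
  have hc0 : c ≠ 0 := by rintro rfl; simp at hc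
  set a : ℂ := (U : Mt (n + 1)) 0 0 with ha
  have hstar : star c = 1 - a := by simp [hcU]
  have hargc : Complex.arg (1 - a) = - Complex.arg c := by
    rw [← hstar]
    have : Complex.arg c ≠ π := by
      intro h
      rw [Complex.arg_eq_pi_iff] at h
      linarith [h.1]
    have h2 := Complex.arg_conj c
    rw [if_neg this] at h2
    exact h2
  have hdc : ∀ {m : ℕ} (V : UG m), Continuous fun s : ℝ => ((1 : Mt m) - (s : ℂ) • (V : Mt m)).det := by
    intro m V
    apply Continuous.matrix_det
    fun_prop
  set g : ℝ → ℂ := fun s => c * ((1 : Mt (n + 1)) - (s : ℂ) • (U : Mt (n + 1))).det /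
      ((1 : Mt n) - (s : ℂ) • (W : Mt n)).det with hg
  have hg1 : g 1 = c * (1 - a) := by
    have := det_ident U W x c hxU hU
    simp only [hg, Complex.ofReal_one, one_smul, this, ← ha]
    field_simp
  have hgc : ContinuousAt g 1 := by
    apply ContinuousAt.div
    · exact (continuous_const.mul (hdc U)).continuousAt
    · exact (hdc W).continuousAt
    · simpa using hW
  have hpos : 0 < (g 1).re ∧ (g 1).im = 0 := by
    rw [hg1, ← hstar]
    have : c * star c = ((Complex.normSq c : ℝ) : ℂ) := Complex.mul_conj c
    rw [this]
    simp [hc0]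
  have harg : Tendsto (fun s => Complex.arg (g s)) (nhdsWithin 1 (Set.Iio 1)) (nhds 0) := by
    have h0 : Complex.arg (g 1) = 0 := by
      rw [Complex.arg_eq_zero_iff]; exact ⟨hpos.1.le, hpos.2⟩
    rw [← h0]
    exact ((Complex.continuousAt_arg (Or.inl hpos.1)).comp hgc).mono_left nhdsWithin_le_nhds
  have hlim : Tendsto (fun s => Lr s (U : Mt (n + 1)) - Lr s (W : Mt n))
      (nhdsWithin 1 (Set.Iio 1)) (nhds (0 - Complex.arg c)) := by
    refine (harg.sub_const (Complex.arg c)).congr' ?_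
    have hmem : Set.Ioo (0 : ℝ) 1 ∈ nhdsWithin (1 : ℝ) (Set.Iio 1) := Ioo_mem_nhdsLT (by norm_num)
    filter_upwards [hmem] with s hs
    have hb := branch U (emb W) x c hc hx hU hs.1.le hs.2
    rw [emb_coe, Lr_emb _ hs.2.le] at hb
    rw [hb]
    congr 1
    have hdet : ((1 : Mt (n + 1)) - (s : ℂ) • embM (W : Mt n)).det =
        ((1 - s : ℝ) : ℂ) * ((1 : Mt n) - (s : ℂ) • (W : Mt n)).det := by
      rw [det_one_sub_smul, evs_emb, Multiset.map_cons, Multiset.prod_cons, det_one_sub_smul]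
      simp
    have hs1 : 0 < 1 - s := by linarith [hs.2]
    have hs0 : ((1 - s : ℝ) : ℂ) ≠ 0 := by exact_mod_cast hs1.ne'
    rw [hdet]
    have : g s = ((1 - s : ℝ) : ℂ) * (c * ((1 : Mt (n + 1)) - (s : ℂ) • (U : Mt (n + 1))).det /
        (((1 - s : ℝ) : ℂ) * ((1 : Mt n) - (s : ℂ) • (W : Mt n)).det)) := by
      simp only [hg]
      have := det_ne_zero_of W hs.1.le hs.2
      field_simp
    rw [this, Complex.arg_real_mul _ hs1]
  have hlim2 := (Lr_tendsto U).sub (Lr_tendsto W)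
  have := tendsto_nhds_unique hlim hlim2
  rw [hargc]
  linarith

/-- The key recursion identity. -/
lemma key_ident {n : ℕ} (U : UG (n + 1)) (hU : (U : Mt (n + 1)) 0 0 ≠ 1) :
    ∃ W : UG n, ∀ V : UG n, ((1 : Mt n) - ((W * V : UG n) : Mt n)).det ≠ 0 →
      Lr 1 ((U * emb V : UG (n + 1)) : Mt (n + 1)) =
        Lr 1 ((W * V : UG n) : Mt n) + Complex.arg (1 - (U : Mt (n + 1)) 0 0) := by
  obtain ⟨W, x, c, hc, hx, hcU, hxU, hdec⟩ := exists_decomp U hU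
  refine ⟨W, fun V hV => ?_⟩
  have hcol : ∀ i, ((U * emb V : UG (n + 1)) : Mt (n + 1)) i 0 = (U : Mt (n + 1)) i 0 := by
    intro i
    simp [Matrix.mul_apply, Fin.sum_univ_succ]
  have := S_ident (U * emb V) (W * V) x c hc hx (by rw [hcol]; exact hcU)
    (fun i => by rw [hcol]; exact hxU i)
    (by
      have h1 : ((U * emb V : UG (n + 1)) : Mt (n + 1)) = (U : Mt (n + 1)) * embM (V : Mt n) := rfl
      have h2 : ((W * V : UG n) : Mt n) = (W : Mt n) * (V : Mt n) := rfl
      rw [h1, h2, embM_mul, ← Matrix.mul_assoc, ← hdec]) hV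
  rw [hcol] at this
  exact this

end Ident


section Null

open Matrix

/-- scalar rotation -/
noncomputable def rot (n : ℕ) (φ : ℝ) : UG n :=
  ⟨Complex.exp (φ * Complex.I) • (1 : Mt n), by
    rw [Matrix.mem_unitaryGroup_iff, star_smul, star_one, smul_mul_smul_comm, mul_one]
    have : Complex.exp (φ * Complex.I) * star (Complex.exp (φ * Complex.I)) = 1 := by
      have h := Complex.mul_conj (Complex.exp (φ * Complex.I))
      rw [Complex.normSq_eq_norm_sq, Complex.norm_exp_ofReal_mul_I] at h
      simpa using h
    rw [this, one_smul]⟩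

lemma rot_mul_coe {n : ℕ} (φ : ℝ) (U : UG n) :
    ((rot n φ * U : UG n) : Mt n) = Complex.exp (φ * Complex.I) • (U : Mt n) := by
  have : ((rot n φ * U : UG n) : Mt n) = (Complex.exp (φ * Complex.I) • (1 : Mt n)) * (U : Mt n) :=
    rfl
  rw [this, smul_mul, Matrix.one_mul]

lemma mem_evs_iff {n : ℕ} (A : Mt n) (c : ℂ) (hc : c ≠ 0) :
    (1 - c • A).det = 0 ↔ c⁻¹ ∈ evs A := by
  rw [det_one_sub_smul, Multiset.prod_eq_zero_iff, Multiset.mem_map]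
  constructor
  · rintro ⟨z, hz, h⟩
    have : c⁻¹ = z := by
      rw [sub_eq_zero] at h
      exact inv_eq_of_mul_eq_one_right h.symm
    rwa [this]
  · intro h
    exact ⟨_, h, by simp [hc]⟩

lemma ae_det_ne {n : ℕ} (μ : Measure (UG n)) [IsProbabilityMeasure μ] [μ.IsHaarMeasure] :
    ∀ᵐ U : UG n ∂μ, ((1 : Mt n) - (U : Mt n)).det ≠ 0 := by
  set B : Set (UG n) := {U | ((1 : Mt n) - (U : Mt n)).det = 0} with hB
  have hBm : MeasurableSet B := by
    apply IsClosed.measurableSet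
    apply isClosed_eq _ continuous_const
    apply Continuous.matrix_det
    fun_prop
  have key : ∀ K : ℕ, (K : ENNReal) * μ B ≤ n := by
    intro K
    set φ : ℕ → ℝ := fun m => 1 / ((m : ℝ) + 1) with hφ
    set Bm : ℕ → Set (UG n) := fun m => (fun U => rot n (φ m) * U) ⁻¹' B with hBmdef
    have hmeas : ∀ m, MeasurableSet (Bm m) := fun m =>
      (measurable_const_mul (rot n (φ m))) hBm
    have hμ : ∀ m, μ (Bm m) = μ B := fun m => measure_preimage_mul μ (rot n (φ m)) B
    have h1 : (K : ENNReal) * μ B = ∫⁻ U, ∑ m ∈ Finset.range K, (Bm m).indicator 1 U ∂μ := by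
      rw [lintegral_finsetSum]
      · simp_rw [lintegral_indicator_one (hmeas _), hμ]
        simp
      · intro m _
        exact measurable_one.indicator (hmeas m)
    rw [h1]
    have h2 : ∀ U : UG n, ∑ m ∈ Finset.range K, (Bm m).indicator (1 : UG n → ENNReal) U ≤ n := by
      intro U
      classical
      have : ∑ m ∈ Finset.range K, (Bm m).indicator (1 : UG n → ENNReal) U =
          (((Finset.range K).filter (fun m => U ∈ Bm m)).card : ENNReal) := by
        rw [Finset.card_filter]
        push_cast
        apply Finset.sum_congr rfl
        intro m _
        simp [Set.indicator_apply]
      rw [this]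
      have hcard : ((Finset.range K).filter (fun m => U ∈ Bm m)).card ≤ n := by
        calc _ ≤ (evs (U : Mt n)).toFinset.card := by
              apply Finset.card_le_card_of_injOn
                (fun m => (Complex.exp (φ m * Complex.I))⁻¹)
              · intro m hm
                have hm2 := (Finset.mem_filter.mp hm).2
                simp only [hBmdef, Set.mem_preimage, hB, Set.mem_ofPred_eq, rot_mul_coe] at hm2
                rw [mem_evs_iff _ _ (Complex.exp_ne_zero _)] at hm2
                simpa using hm2
              · intro m _ m' _ h
                have h3 := inv_injective h
                have hr : ∀ m, φ m ∈ Set.Ioc (-π) π := by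
                  intro m
                  have h0 : 0 < φ m := by simp only [hφ]; positivity
                  have h1 : φ m ≤ 1 := by
                    simp only [hφ]
                    rw [div_le_one (by positivity)]
                    linarith [Nat.cast_nonneg (α := ℝ) m]
                  constructor <;> linarith [Real.pi_gt_three]
                have h4 := congrArg Complex.arg h3
                rw [Complex.arg_exp_mul_I, Complex.arg_exp_mul_I] at h4
                have h5 : ∀ m, toIocMod Real.two_pi_pos (-π) (φ m) = φ m := by
                  intro m
                  rw [toIocMod_eq_self]
                  have := hr m
                  constructor <;> linarith [this.1, this.2]
                rw [h5, h5] at h4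
                simp only [hφ, one_div, _root_.inv_inj] at h4
                have : (m : ℝ) = m' := by linarith
                exact_mod_cast this
          _ ≤ Multiset.card (evs (U : Mt n)) := Multiset.toFinset_card_le _
          _ = n := card_evs _
      exact_mod_cast hcard
    calc _ ≤ ∫⁻ _, (n : ENNReal) ∂μ := lintegral_mono h2
      _ = n := by simp
  have : μ B = 0 := by
    by_contra h
    obtain ⟨K, hK⟩ := ENNReal.exists_nat_mul_gt h (ENNReal.natCast_ne_top n)
    exact absurd (key K) (not_le.mpr hK)
  rw [ae_iff]
  simpa [hB] using this

lemma col_norm {n : ℕ} (U : UG (n + 1)) : ∑ i, ‖(U : Mt (n + 1)) i 0‖ ^ 2 = 1 := by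
  have hUU : star (U : Mt (n + 1)) * (U : Mt (n + 1)) = 1 := Matrix.mem_unitaryGroup_iff'.mp U.2
  have := congrFun (congrFun hUU 0) 0
  rw [Matrix.mul_apply] at this
  simp only [Matrix.star_apply, Matrix.one_apply_eq] at this
  have h3 : ∀ z : ℂ, star z * z = ((‖z‖ ^ 2 : ℝ) : ℂ) := by
    intro z
    rw [← Complex.normSq_eq_norm_sq, ← Complex.mul_conj, mul_comm]; rfl
  simp_rw [h3] at this
  exact_mod_cast this

lemma ae_corner_ne {n : ℕ} (μ : Measure (UG (n + 1))) [IsProbabilityMeasure μ]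
    [μ.IsHaarMeasure] : ∀ᵐ U : UG (n + 1) ∂μ, (U : Mt (n + 1)) 0 0 ≠ 1 := by
  filter_upwards [ae_det_ne μ] with U hU h
  apply hU
  have hnorm := col_norm U
  rw [Fin.sum_univ_succ, h] at hnorm
  have hz : ∑ i : Fin n, ‖(U : Mt (n + 1)) i.succ 0‖ ^ 2 = 0 := by
    simp at hnorm ⊢
    linarith
  rw [Finset.sum_eq_zero_iff_of_nonneg (fun _ _ => by positivity)] at hz
  obtain ⟨W, hW⟩ := exists_emb U (fun i => by
    refine Fin.cases ?_ (fun i => ?_) i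
    · simp [h]
    · have := hz i (Finset.mem_univ _)
      simpa using this)
  have := (mem_evs_iff (U : Mt (n + 1)) 1 one_ne_zero).mpr (by
    rw [hW, emb_coe, evs_emb]; simp)
  simpa using this

end Null


section Moments

open Matrix

lemma exp_le_quad {x : ℝ} (hx : |x| ≤ 1) : Real.exp x ≤ 1 + x + x ^ 2 := by
  have h := Real.abs_exp_sub_one_sub_id_le hx
  have := (abs_le.mp h).2
  linarith

lemma re_one_sub_nonneg {a : ℂ} (ha : ‖a‖ ≤ 1) : 0 ≤ (1 - a).re := by
  have := (Complex.re_le_norm a).trans ha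
  simp; exact this

lemma exp_arg_le {a : ℂ} (ha : ‖a‖ ≤ 1) {t : ℝ} (ht : t = 1 ∨ t = -1) :
    Real.exp (t * Complex.arg (1 - a)) ≤ 1 - t * a.im + 30 * ‖a‖ ^ 2 := by
  have htabs : |t| = 1 := by rcases ht with h | h <;> simp [h]
  by_cases h : ‖a‖ ≤ 1 / 2
  · have h1 := Complex.norm_log_one_add_sub_self_le (z := -a) (by rw [norm_neg]; linarith)
    rw [norm_neg] at h1
    have h2 : ‖a‖ ^ 2 * (1 - ‖a‖)⁻¹ / 2 ≤ ‖a‖ ^ 2 := by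
      have : (1 - ‖a‖)⁻¹ ≤ 2 := by
        rw [inv_le_comm₀ (by linarith) (by norm_num)]; linarith
      nlinarith [sq_nonneg ‖a‖]
    have h3 : |Complex.arg (1 - a) + a.im| ≤ ‖a‖ ^ 2 := by
      have h4 := (Complex.abs_im_le_norm _).trans (h1.trans h2)
      simpa [Complex.log_im, sub_eq_add_neg] using h4
    have him := Complex.abs_im_le_norm a
    set x := t * Complex.arg (1 - a) with hx
    have h5 : |x + t * a.im| ≤ ‖a‖ ^ 2 := by
      rw [hx, ← mul_add, abs_mul, htabs, one_mul]; exact h3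
    have h6 : |x| ≤ ‖a‖ ^ 2 + ‖a‖ := by
      have : x = (x + t * a.im) - t * a.im := by ring
      rw [this]
      refine (abs_sub _ _).trans ?_
      rw [abs_mul t, htabs, one_mul]
      linarith
    have hn := norm_nonneg a
    have h7 : |x| ≤ 2 * ‖a‖ := by nlinarith
    have h8 := exp_le_quad (x := x) (by linarith)
    have h9 : x ^ 2 ≤ 4 * ‖a‖ ^ 2 := by
      rw [← sq_abs x]
      nlinarith [abs_nonneg x]
    have := (abs_le.mp h5).2
    nlinarith [sq_nonneg ‖a‖]
  · push Not at h
    have h1 : |Complex.arg (1 - a)| ≤ π / 2 :=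
      Complex.abs_arg_le_pi_div_two_iff.mpr (re_one_sub_nonneg ha)
    have h2 : t * Complex.arg (1 - a) ≤ π / 2 := by
      refine (le_abs_self _).trans ?_
      rw [abs_mul, htabs, one_mul]; exact h1
    have h3 : Real.exp (π / 2) ≤ 6 := by
      have : Real.exp (π / 2) ≤ Real.exp (1.6) := by
        apply Real.exp_le_exp.mpr
        have := Real.pi_lt_d2
        linarith
      refine this.trans ?_
      have h5 : Real.exp 1.6 = Real.exp 1 * Real.exp 0.6 := by
        rw [← Real.exp_add]; norm_num
      have h6 := exp_le_quad (x := 0.6) (by rw [abs_of_pos] <;> norm_num)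
      have h7 := Real.exp_one_lt_d9
      rw [h5]
      have := Real.exp_pos (0.6)
      have := Real.exp_pos 1
      nlinarith
    have h4 := Real.exp_le_exp.mpr h2
    have him := (Complex.abs_im_le_norm a).trans ha
    have : t * a.im ≤ 1 := by
      refine (le_abs_self _).trans ?_
      rw [abs_mul, htabs, one_mul]; exact him
    nlinarith

lemma int_im {n : ℕ} (μ : Measure (UG (n + 1))) [IsProbabilityMeasure μ] [μ.IsHaarMeasure] :
    ∫ U : UG (n + 1), ((U : Mt (n + 1)) 0 0).im ∂μ = 0 := by
  have h := integral_mul_left_eq_self (μ := μ)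
    (fun U : UG (n + 1) => ((U : Mt (n + 1)) 0 0).im) (rot (n + 1) π)
  simp only [rot_mul_coe, Complex.exp_pi_mul_I, Matrix.smul_apply, smul_eq_mul, neg_mul, one_mul,
    Complex.neg_im, integral_neg] at h
  linarith

lemma continuous_entry {n : ℕ} (i j : Fin n) :
    Continuous (fun U : UG n => (U : Mt n) i j) :=
  (continuous_apply_apply (ρ := fun _ _ => ℂ) i j).comp continuous_subtype_val

lemma integrable_cont {n : ℕ} (μ : Measure (UG n)) [IsProbabilityMeasure μ]
    {f : UG n → ℝ} (hf : Continuous f) : Integrable f μ := by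
  rw [← integrableOn_univ]
  exact hf.continuousOn.integrableOn_compact isCompact_univ

/-- permutation as unitary -/
noncomputable def permU {n : ℕ} (s : Equiv.Perm (Fin n)) : UG n :=
  ⟨s.permMatrix ℂ, by
    rw [Matrix.mem_unitaryGroup_iff, Matrix.star_eq_conjTranspose, Matrix.conjTranspose_permMatrix,
      ← Matrix.permMatrix_mul]
    simp⟩

lemma permU_entry {n : ℕ} (s : Equiv.Perm (Fin n)) (U : UG n) (i j : Fin n) :
    ((permU s * U : UG n) : Mt n) i j = (U : Mt n) (s i) j := by
  have : ((permU s * U : UG n) : Mt n) = s.permMatrix ℂ * (U : Mt n) := rfl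
  rw [this, Equiv.Perm.permMatrix, PEquiv.toMatrix_toPEquiv_mul]
  rfl

lemma int_sq {n : ℕ} (μ : Measure (UG (n + 1))) [IsProbabilityMeasure μ] [μ.IsHaarMeasure] :
    ∫ U : UG (n + 1), ‖(U : Mt (n + 1)) 0 0‖ ^ 2 ∂μ = 1 / ((n : ℝ) + 1) := by
  have h : ∀ i : Fin (n + 1), ∫ U : UG (n + 1), ‖(U : Mt (n + 1)) i 0‖ ^ 2 ∂μ =
      ∫ U : UG (n + 1), ‖(U : Mt (n + 1)) 0 0‖ ^ 2 ∂μ := by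
    intro i
    have h := integral_mul_left_eq_self (μ := μ)
      (fun U : UG (n + 1) => ‖(U : Mt (n + 1)) 0 0‖ ^ 2) (permU (Equiv.swap 0 i))
    simpa only [permU_entry, Equiv.swap_apply_left] using h
  have h1 : ∫ U : UG (n + 1), ∑ i, ‖(U : Mt (n + 1)) i 0‖ ^ 2 ∂μ = 1 := by
    simp_rw [col_norm]; simp
  have h_integ : ∀ i : Fin (n + 1), Integrable (fun U : UG (n + 1) => ‖(U : Mt (n + 1)) i 0‖ ^ 2) μ :=
    fun i => integrable_cont μ ((continuous_entry i 0).norm.pow 2)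
  rw [integral_finsetSum _ (fun i _ => h_integ i)] at h1
  simp_rw [h] at h1
  simp at h1
  field_simp
  linarith

/-- exponential moment -/
noncomputable def Mom {n : ℕ} (μ : Measure (UG n)) (t : ℝ) : ENNReal :=
  ∫⁻ U : UG n, ENNReal.ofReal (Real.exp (t * Lr 1 (U : Mt n))) ∂μ

lemma measurable_F {n : ℕ} (t : ℝ) :
    Measurable (fun U : UG n => ENNReal.ofReal (Real.exp (t * Lr 1 (U : Mt n)))) :=
  ENNReal.measurable_ofReal.comp (Real.measurable_exp.comp (measurable_Lr_one.const_mul t))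

lemma entry_le {n : ℕ} (U : UG (n + 1)) : ‖(U : Mt (n + 1)) 0 0‖ ≤ 1 :=
  entry_norm_bound_of_unitary U.2 0 0

lemma corner_bound {n : ℕ} (μ : Measure (UG (n + 1))) [IsProbabilityMeasure μ] [μ.IsHaarMeasure]
    {t : ℝ} (ht : t = 1 ∨ t = -1) :
    ∫⁻ U : UG (n + 1), ENNReal.ofReal (Real.exp (t * Complex.arg (1 - (U : Mt (n + 1)) 0 0))) ∂μ
      ≤ ENNReal.ofReal (1 + 30 / ((n : ℝ) + 1)) := by
  have hc := continuous_entry (n := n + 1) 0 0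
  have i1 : Integrable (fun U : UG (n + 1) => ((U : Mt (n + 1)) 0 0).im) μ :=
    integrable_cont μ (Complex.continuous_im.comp hc)
  have i2 : Integrable (fun U : UG (n + 1) => ‖(U : Mt (n + 1)) 0 0‖ ^ 2) μ :=
    integrable_cont μ (hc.norm.pow 2)
  have i3 : Integrable (fun U : UG (n + 1) => 1 - t * ((U : Mt (n + 1)) 0 0).im) μ :=
    (integrable_const _).sub (i1.const_mul t)
  have i4 : Integrable (fun U : UG (n + 1) => 1 - t * ((U : Mt (n + 1)) 0 0).im +
      30 * ‖(U : Mt (n + 1)) 0 0‖ ^ 2) μ := i3.add (i2.const_mul 30)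
  calc _ ≤ ∫⁻ U : UG (n + 1), ENNReal.ofReal (1 - t * ((U : Mt (n + 1)) 0 0).im +
        30 * ‖(U : Mt (n + 1)) 0 0‖ ^ 2) ∂μ := by
        apply lintegral_mono
        intro U
        exact ENNReal.ofReal_le_ofReal (exp_arg_le (entry_le U) ht)
    _ = ENNReal.ofReal (∫ U : UG (n + 1), (1 - t * ((U : Mt (n + 1)) 0 0).im +
        30 * ‖(U : Mt (n + 1)) 0 0‖ ^ 2) ∂μ) := by
        rw [ofReal_integral_eq_lintegral_ofReal i4]
        · refine Eventually.of_forall fun U => ?_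
          exact (Real.exp_pos _).le.trans (exp_arg_le (entry_le U) ht)
    _ = _ := by
        congr 1
        rw [integral_add i3 (i2.const_mul 30), integral_sub (integrable_const _) (i1.const_mul t),
          integral_const_mul, integral_const_mul, int_im, int_sq]
        simp [div_eq_mul_inv]

lemma Mom_rec {n : ℕ} (μ : Measure (UG (n + 1))) [IsProbabilityMeasure μ] [μ.IsHaarMeasure]
    (ν : Measure (UG n)) [IsProbabilityMeasure ν] [ν.IsHaarMeasure]
    {t : ℝ} (ht : t = 1 ∨ t = -1) :
    Mom μ t ≤ ENNReal.ofReal (1 + 30 / ((n : ℝ) + 1)) * Mom ν t := by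
  have := haar_right_inv μ
  set F : UG (n + 1) → ENNReal :=
    fun U => ENNReal.ofReal (Real.exp (t * Lr 1 (U : Mt (n + 1)))) with hF
  have hFm : Measurable F := measurable_F t
  have h1 : Mom μ t = ∫⁻ V, ∫⁻ U, F (U * emb V) ∂μ ∂ν := by
    have : ∀ V, ∫⁻ U, F (U * emb V) ∂μ = Mom μ t := fun V =>
      lintegral_mul_right_eq_self F (emb V)
    simp_rw [this]
    simp
  rw [h1, lintegral_lintegral_swap]
  · calc _ ≤ ∫⁻ U : UG (n + 1), ENNReal.ofReal
          (Real.exp (t * Complex.arg (1 - (U : Mt (n + 1)) 0 0))) * Mom ν t ∂μ := by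
          apply lintegral_mono_ae
          filter_upwards [ae_corner_ne μ] with U hU
          obtain ⟨W, hW⟩ := key_ident U hU
          have hae : ∀ᵐ V : UG n ∂ν, (1 - ((W * V : UG n) : Mt n)).det ≠ 0 :=
            (measurePreserving_mul_left ν W).quasiMeasurePreserving.ae (ae_det_ne ν)
          have : ∫⁻ V, F (U * emb V) ∂ν = ∫⁻ V : UG n, ENNReal.ofReal
              (Real.exp (t * Complex.arg (1 - (U : Mt (n + 1)) 0 0))) *
              ENNReal.ofReal (Real.exp (t * Lr 1 ((W * V : UG n) : Mt n))) ∂ν := by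
            apply lintegral_congr_ae
            filter_upwards [hae] with V hV
            simp only [hF]
            rw [hW V hV, ← ENNReal.ofReal_mul (Real.exp_pos _).le, ← Real.exp_add]
            congr 2
            ring
          rw [this, lintegral_const_mul]
          · rw [lintegral_mul_left_eq_self
              (fun V : UG n => ENNReal.ofReal (Real.exp (t * Lr 1 (V : Mt n)))) W]
            rfl
          · exact (measurable_F t).comp (measurable_const_mul W)
      _ ≤ _ := by
          rw [lintegral_mul_const'']
          · gcongr
            exact corner_bound μ ht
          · apply Measurable.aemeasurable
            have hc := continuous_entry (n := n + 1) 0 0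
            exact ENNReal.measurable_ofReal.comp (Real.measurable_exp.comp
              ((Complex.measurable_arg.comp (measurable_const.sub hc.measurable)).const_mul t))
  · apply Measurable.aemeasurable
    refine hFm.comp ?_
    exact (continuous_snd.mul (continuous_emb.comp continuous_fst)).measurable

lemma Mom_bound (n : ℕ) : ∀ (μ : Measure (UG n)), IsProbabilityMeasure μ → μ.IsHaarMeasure →
    ∀ t : ℝ, (t = 1 ∨ t = -1) →
    Mom μ t ≤ ENNReal.ofReal (Real.exp (30 * ((harmonic n : ℚ) : ℝ))) := by
  induction n with
  | zero =>
    intro μ _ _ t _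
    have : ∀ A : Mt 0, Lr 1 A = 0 := by
      intro A
      have h : evs A = 0 := Multiset.card_eq_zero.mp (card_evs A)
      simp [Lr, h]
    simp [Mom, this]
  | succ n ih =>
    intro μ _ _ t ht
    obtain ⟨ν, h1, h2⟩ := exists_haar n
    refine (Mom_rec μ ν ht).trans ?_
    refine (mul_le_mul_right (ih ν h1 h2 t ht) _).trans ?_
    rw [← ENNReal.ofReal_mul (by positivity)]
    apply ENNReal.ofReal_le_ofReal
    rw [harmonic_succ]
    push_cast
    rw [mul_add, Real.exp_add, mul_comm]
    gcongr
    have := Real.add_one_le_exp (30 * ((n : ℝ) + 1)⁻¹)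
    rw [div_eq_mul_inv]
    linarith

lemma Mom_bound_log {n : ℕ} (μ : Measure (UG n)) [IsProbabilityMeasure μ]
    [μ.IsHaarMeasure] {t : ℝ} (ht : t = 1 ∨ t = -1) :
    Mom μ t ≤ ENNReal.ofReal (Real.exp (30 * (1 + Real.log n))) := by
  refine (Mom_bound n μ inferInstance inferInstance t ht).trans ?_
  apply ENNReal.ofReal_le_ofReal
  apply Real.exp_le_exp.mpr
  have := harmonic_le_one_add_log n
  linarith

end Moments

section Counting

open Matrix

/-- the angle in `[0, 2π)` -/
noncomputable def ang (z : ℂ) : ℝ :=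
  if 0 ≤ Complex.arg z then Complex.arg z else Complex.arg z + 2 * π

lemma exp_ang {z : ℂ} (hz : ‖z‖ = 1) : Complex.exp (ang z * Complex.I) = z := by
  have h := Complex.norm_mul_exp_arg_mul_I z
  rw [hz, Complex.ofReal_one, one_mul] at h
  unfold ang
  split_ifs
  · exact h
  · push_cast
    rw [add_mul, Complex.exp_add, Complex.exp_two_pi_mul_I, mul_one, h]

lemma ang_mem {z : ℂ} (hz : ‖z‖ = 1) (h1 : z ≠ 1) : 0 < ang z ∧ ang z < 2 * π := by
  have ha := Complex.arg_le_pi z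
  have hb := Complex.neg_pi_lt_arg z
  have hpi := Real.pi_pos
  have h0 : ang z ≠ 0 := by
    intro h
    have := exp_ang hz
    rw [h] at this
    apply h1
    simpa using this.symm
  have h2 : 0 ≤ ang z := by
    unfold ang
    split_ifs with h
    · exact h
    · linarith
  refine ⟨lt_of_le_of_ne h2 h0.symm, ?_⟩
  unfold ang
  split_ifs with h <;> linarith

lemma arg_one_sub_exp {ψ : ℝ} (h0 : 0 < ψ) (h1 : ψ < 2 * π) :
    Complex.arg (1 - Complex.exp (ψ * Complex.I)) = (ψ - π) / 2 := by
  have hs : 0 < 2 * Real.sin (ψ / 2) := by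
    have := Real.sin_pos_of_pos_of_lt_pi (x := ψ / 2) (by linarith) (by linarith)
    linarith
  have key : 1 - Complex.exp (ψ * Complex.I) = ((2 * Real.sin (ψ / 2) : ℝ) : ℂ) *
      (Complex.cos (((ψ - π) / 2 : ℝ) : ℂ) + Complex.sin (((ψ - π) / 2 : ℝ) : ℂ) * Complex.I) := by
    have hc : Real.cos ((ψ - π) / 2) = Real.sin (ψ / 2) := by
      rw [show (ψ - π) / 2 = ψ / 2 - π / 2 by ring, Real.cos_sub_pi_div_two]
    have hsn : Real.sin ((ψ - π) / 2) = - Real.cos (ψ / 2) := by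
      rw [show (ψ - π) / 2 = ψ / 2 - π / 2 by ring, Real.sin_sub_pi_div_two]
    have hcψ : Real.cos ψ = 1 - 2 * Real.sin (ψ / 2) ^ 2 := by
      have := Real.cos_two_mul (ψ / 2)
      have h2 := Real.sin_sq_add_cos_sq (ψ / 2)
      rw [show 2 * (ψ / 2) = ψ by ring] at this
      linarith
    have hsψ : Real.sin ψ = 2 * Real.sin (ψ / 2) * Real.cos (ψ / 2) := by
      have := Real.sin_two_mul (ψ / 2)
      rwa [show 2 * (ψ / 2) = ψ by ring] at this
    rw [Complex.exp_mul_I, ← Complex.ofReal_cos, ← Complex.ofReal_sin, ← Complex.ofReal_cos,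
      ← Complex.ofReal_sin, hc, hsn, hcψ, hsψ]
    push_cast
    ring
  rw [key]
  apply Complex.arg_mul_cos_add_sin_mul_I hs
  constructor <;> linarith [Real.pi_pos]

lemma arg_diff {z : ℂ} (hz : ‖z‖ = 1) (h1 : z ≠ 1) {θ : ℝ} (hθ0 : 0 ≤ θ) (hθ : θ ≤ 2 * π)
    (h2 : Complex.exp ((-θ : ℝ) * Complex.I) * z ≠ 1) :
    Complex.arg (1 - Complex.exp ((-θ : ℝ) * Complex.I) * z) - Complex.arg (1 - z) =
      (if ang z ≤ θ then π else 0) - θ / 2 := by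
  obtain ⟨ha, hb⟩ := ang_mem hz h1
  have hz2 := exp_ang hz
  have e1 : Complex.exp ((-θ : ℝ) * Complex.I) * z =
      Complex.exp ((ang z - θ : ℝ) * Complex.I) := by
    conv_lhs => rw [← hz2]
    rw [← Complex.exp_add]
    congr 1
    push_cast
    ring
  have e2 : Complex.arg (1 - z) = (ang z - π) / 2 := by
    conv_lhs => rw [← hz2]
    exact arg_one_sub_exp ha hb
  have hne : ang z ≠ θ := by
    intro h
    apply h2
    rw [e1, h]
    simp
  rw [e2, e1]
  split_ifs with h
  · have hlt := lt_of_le_of_ne h hne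
    have e3 : Complex.exp ((ang z - θ : ℝ) * Complex.I) =
        Complex.exp ((ang z - θ + 2 * π : ℝ) * Complex.I) := by
      push_cast
      rw [add_mul _ (2 * (π : ℂ)), Complex.exp_add, Complex.exp_two_pi_mul_I, mul_one]
    rw [e3, arg_one_sub_exp (by linarith) (by linarith)]
    ring
  · push Not at h
    rw [arg_one_sub_exp (by linarith) (by linarith)]
    ring

open Classical in
lemma sum_diff (s : Multiset ℂ) {θ : ℝ} (hθ0 : 0 ≤ θ) (hθ : θ ≤ 2 * π)
    (h : ∀ z ∈ s, ‖z‖ = 1 ∧ z ≠ 1 ∧ Complex.exp ((-θ : ℝ) * Complex.I) * z ≠ 1) :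
    (s.map (fun z => Complex.arg (1 - Complex.exp ((-θ : ℝ) * Complex.I) * z))).sum -
      (s.map (fun z => Complex.arg (1 - z))).sum =
      π * (Multiset.card ((s.map ang).filter (· ∈ Set.Icc 0 θ)) : ℝ) -
        (Multiset.card s : ℝ) * θ / 2 := by
  induction s using Multiset.induction_on with
  | empty => simp
  | cons a s ih =>
    have ih2 := ih (fun z hz => h z (Multiset.mem_cons_of_mem hz))
    obtain ⟨h1, h2, h3⟩ := h a (Multiset.mem_cons_self a s)
    have hd := arg_diff h1 h2 hθ0 hθ h3
    have h0 := (ang_mem h1 h2).1.le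
    simp only [Multiset.map_cons, Multiset.sum_cons, Multiset.card_cons]
    by_cases hc : ang a ≤ θ
    · rw [Multiset.filter_cons_of_pos (p := fun x => x ∈ Set.Icc 0 θ) _ (show ang a ∈ Set.Icc 0 θ from ⟨h0, hc⟩)]
      rw [if_pos hc] at hd
      rw [Multiset.card_cons]
      simp only [Nat.cast_add, Nat.cast_one]
      linarith
    · rw [Multiset.filter_cons_of_neg (p := fun x => x ∈ Set.Icc 0 θ) _ (fun hh => hc (Set.mem_Icc.mp hh).2)]
      rw [if_neg hc] at hd
      simp only [Nat.cast_add, Nat.cast_one]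
      linarith

lemma count_ident {n : ℕ} (U : UG n) {θ : ℝ} (hθ0 : 0 ≤ θ) (hθ : θ ≤ 2 * π)
    (h1 : ((1 : Mt n) - (U : Mt n)).det ≠ 0)
    (h2 : ((1 : Mt n) - ((rot n (-θ) * U : UG n) : Mt n)).det ≠ 0) :
    Lr 1 ((rot n (-θ) * U : UG n) : Mt n) - Lr 1 (U : Mt n) =
      π * (countFun n U θ : ℝ) - n * θ / 2 := by
  rw [rot_mul_coe] at h2 ⊢
  have hs := sum_diff (evs (U : Mt n)) hθ0 hθ (fun z hz => by
    refine ⟨norm_evs U hz, ?_, ?_⟩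
    · rintro rfl
      apply h1
      have := (mem_evs_iff (U : Mt n) 1 one_ne_zero).mpr (by simpa using hz)
      simpa using this
    · intro h
      apply h2
      rw [mem_evs_iff _ _ (Complex.exp_ne_zero _)]
      rwa [inv_eq_of_mul_eq_one_right h])
  rw [card_evs] at hs
  unfold Lr
  rw [evs_smul _ _ (Complex.exp_ne_zero _), Multiset.map_map]
  simp only [Complex.ofReal_one, one_mul, Function.comp_def]
  rw [hs]
  unfold countFun countAngles eigenAngles
  congr!

lemma exp_dev {a b : ℝ} : Real.exp (|a - b| / 2) ≤
    Real.exp (1 * a) + Real.exp (-1 * a) + (Real.exp (1 * b) + Real.exp (-1 * b)) := by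
  have h1 : ∀ x : ℝ, Real.exp |x| ≤ Real.exp (1 * x) + Real.exp (-1 * x) := by
    intro x
    rcases abs_choice x with h | h <;> rw [h]
    · rw [one_mul]; linarith [Real.exp_pos (-1 * x)]
    · rw [neg_one_mul]; linarith [Real.exp_pos (1 * x)]
  have h2 := abs_sub a b
  refine le_trans ?_ (add_le_add (h1 a) (h1 b))
  rcases le_total |a| |b| with h | h
  · refine (Real.exp_le_exp.mpr (show |a - b| / 2 ≤ |b| by linarith)).trans ?_
    linarith [Real.exp_pos |a|]
  · refine (Real.exp_le_exp.mpr (show |a - b| / 2 ≤ |a| by linarith)).trans ?_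
    linarith [Real.exp_pos |b|]

/-- exponential of the log-determinant phase -/
noncomputable def Ef {n : ℕ} (t : ℝ) (U : UG n) : ℝ := Real.exp (t * Lr 1 (U : Mt n))

/-- the dominating function -/
noncomputable def Gf (n : ℕ) (U : UG n) : ℝ :=
  ∑ k ∈ Finset.Icc 1 n, (Ef 1 (rot n (-(2 * π * k / n)) * U) +
    Ef (-1) (rot n (-(2 * π * k / n)) * U) + (Ef 1 U + Ef (-1) U))

lemma Ef_pos {n : ℕ} (t : ℝ) (U : UG n) : 0 < Ef t U := Real.exp_pos _

lemma maxDev_le {n : ℕ} (hn : 1 ≤ n) (μ : Measure (UG n)) [IsProbabilityMeasure μ]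
    [μ.IsHaarMeasure] :
    ∀ᵐ U : UG n ∂μ, Real.exp (π / 2 * maxDev n U) ≤ Gf n U := by
  have hae : ∀ᵐ U : UG n ∂μ, ∀ k : ℕ,
      ((1 : Mt n) - ((rot n (-(2 * π * k / n)) * U : UG n) : Mt n)).det ≠ 0 := by
    rw [ae_all_iff]
    intro k
    exact (measurePreserving_mul_left μ (rot n (-(2 * π * k / n)))).quasiMeasurePreserving.ae
      (ae_det_ne μ)
  filter_upwards [ae_det_ne μ, hae] with U h1 h2
  have hne : Nonempty (Finset.Icc 1 n : Finset ℕ) := ⟨⟨1, Finset.mem_Icc.mpr ⟨le_rfl, hn⟩⟩⟩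
  obtain ⟨k, hk⟩ := exists_eq_ciSup_of_finite (f := fun k : (Finset.Icc 1 n : Finset ℕ) =>
    |(countFun n U (2 * π * (k : ℕ) / n) : ℝ) - ((k : ℕ) : ℝ)|)
  have hk2 : maxDev n U = |(countFun n U (2 * π * (k : ℕ) / n) : ℝ) - ((k : ℕ) : ℝ)| := hk.symm
  rw [hk2]
  obtain ⟨k, hkm⟩ := k
  have hkm2 := Finset.mem_Icc.mp hkm
  simp only
  have hn0 : (0 : ℝ) < n := by exact_mod_cast hn
  have hkn : (k : ℝ) ≤ n := by exact_mod_cast hkm2.2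
  have hc := count_ident U (θ := 2 * π * k / n) (by positivity) (by
    rw [div_le_iff₀ hn0]
    exact mul_le_mul_of_nonneg_left hkn Real.two_pi_pos.le) h1 (h2 k)
  have hc2 : (n : ℝ) * (2 * π * k / n) / 2 = π * k := by field_simp
  rw [hc2, ← mul_sub] at hc
  have hc3 : π / 2 * |(countFun n U (2 * π * k / n) : ℝ) - (k : ℝ)| =
      |Lr 1 ((rot n (-(2 * π * k / n)) * U : UG n) : Mt n) - Lr 1 (U : Mt n)| / 2 := by
    rw [hc, abs_mul, abs_of_pos Real.pi_pos]
    ring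
  rw [hc3]
  refine exp_dev.trans ?_
  unfold Gf
  exact Finset.single_le_sum (f := fun k : ℕ => Ef 1 (rot n (-(2 * π * k / n)) * U) +
    Ef (-1) (rot n (-(2 * π * k / n)) * U) + (Ef 1 U + Ef (-1) U))
    (fun i _ => by
      have := fun t (V : UG n) => (Ef_pos t V).le
      exact add_nonneg (add_nonneg (this _ _) (this _ _)) (add_nonneg (this _ _) (this _ _))) hkm

lemma measurable_Ef {n : ℕ} (t : ℝ) : Measurable (Ef t : UG n → ℝ) :=
  Real.measurable_exp.comp (measurable_Lr_one.const_mul t)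

lemma integrable_Ef {n : ℕ} (μ : Measure (UG n)) [IsProbabilityMeasure μ] (t : ℝ) :
    Integrable (Ef t : UG n → ℝ) μ := by
  refine Integrable.of_bound (measurable_Ef t).aestronglyMeasurable (Real.exp (|t| * (n * π))) ?_
  refine Eventually.of_forall fun U => ?_
  rw [Real.norm_of_nonneg (Ef_pos t U).le]
  apply Real.exp_le_exp.mpr
  refine (le_abs_self _).trans ?_
  rw [abs_mul]
  exact mul_le_mul_of_nonneg_left (Lr_one_bound U) (abs_nonneg _)

lemma integral_Ef {n : ℕ} (μ : Measure (UG n)) [IsProbabilityMeasure μ] [μ.IsHaarMeasure]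
    {t : ℝ} (ht : t = 1 ∨ t = -1) : ∫ U, Ef t U ∂μ ≤ Real.exp (30 * (1 + Real.log n)) := by
  rw [integral_eq_lintegral_of_nonneg_ae (Eventually.of_forall fun U => (Ef_pos t U).le)
    (measurable_Ef t).aestronglyMeasurable]
  exact ENNReal.toReal_le_of_le_ofReal (Real.exp_pos _).le (Mom_bound_log μ ht)

lemma integrable_Ef_rot {n : ℕ} (μ : Measure (UG n)) [IsProbabilityMeasure μ] [μ.IsHaarMeasure]
    (t : ℝ) (W : UG n) : Integrable (fun U : UG n => Ef t (W * U)) μ :=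
  (integrable_Ef μ t).comp_mul_left W

lemma integrable_Gf {n : ℕ} (μ : Measure (UG n)) [IsProbabilityMeasure μ] [μ.IsHaarMeasure] :
    Integrable (Gf n) μ := by
  unfold Gf
  apply integrable_finsetSum
  intro k _
  exact ((integrable_Ef_rot μ _ _).add (integrable_Ef_rot μ _ _)).add
    ((integrable_Ef μ _).add (integrable_Ef μ _))

lemma integral_Gf {n : ℕ} (μ : Measure (UG n)) [IsProbabilityMeasure μ] [μ.IsHaarMeasure] :
    ∫ U, Gf n U ∂μ ≤ n * (4 * Real.exp (30 * (1 + Real.log n))) := by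
  unfold Gf
  have hi : ∀ k : ℕ, Integrable (fun U : UG n => Ef 1 (rot n (-(2 * π * k / n)) * U) +
    Ef (-1) (rot n (-(2 * π * k / n)) * U) + (Ef 1 U + Ef (-1) U)) μ := fun k =>
      ((integrable_Ef_rot μ _ _).add (integrable_Ef_rot μ _ _)).add
        ((integrable_Ef μ _).add (integrable_Ef μ _))
  rw [integral_finsetSum _ (fun k _ => hi k)]
  have hb : ∀ k ∈ Finset.Icc 1 n, ∫ U : UG n, (Ef 1 (rot n (-(2 * π * k / n)) * U) +
    Ef (-1) (rot n (-(2 * π * k / n)) * U) + (Ef 1 U + Ef (-1) U)) ∂μ ≤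
      4 * Real.exp (30 * (1 + Real.log n)) := by
    intro k _
    have a1 := integrable_Ef_rot μ 1 (rot n (-(2 * π * k / n)))
    have a2 := integrable_Ef_rot μ (-1) (rot n (-(2 * π * k / n)))
    have a3 := integrable_Ef μ 1
    have a4 := integrable_Ef μ (-1)
    have a12 : Integrable (fun U : UG n => Ef 1 (rot n (-(2 * π * k / n)) * U) +
      Ef (-1) (rot n (-(2 * π * k / n)) * U)) μ := a1.add a2
    have a34 : Integrable (fun U : UG n => Ef 1 U + Ef (-1) U) μ := a3.add a4
    rw [integral_add a12 a34, integral_add a1 a2, integral_add a3 a4,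
      integral_mul_left_eq_self (μ := μ) (Ef 1), integral_mul_left_eq_self (μ := μ) (Ef (-1))]
    have b1 := integral_Ef μ (t := 1) (Or.inl rfl)
    have b2 := integral_Ef μ (t := -1) (Or.inr rfl)
    linarith
  refine (Finset.sum_le_sum hb).trans ?_
  simp

lemma rpow_le_exp {q x : ℝ} (hq : 0 < q) (hx : 0 ≤ x) :
    x ^ q ≤ (2 * q) ^ q * Real.exp (x / 2) := by
  have h1 : x / (2 * q) ≤ Real.exp (x / (2 * q)) := by
    have := Real.add_one_le_exp (x / (2 * q))
    linarith
  have h2 : x = (2 * q) * (x / (2 * q)) := by field_simp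
  conv_lhs => rw [h2]
  rw [Real.mul_rpow (by positivity) (by positivity)]
  gcongr
  refine (Real.rpow_le_rpow (by positivity) h1 hq.le).trans ?_
  rw [← Real.exp_mul]
  apply le_of_eq
  congr 1
  field_simp

lemma pointwise_bound {q M L G : ℝ} (hq : 0 < q) (hM : 0 ≤ M) (hL : 0 ≤ L)
    (h : Real.exp (π / 2 * M) ≤ G) :
    M ^ q ≤ 160 ^ q * L ^ q + (2 * q) ^ q * (Real.exp (-(80 * L)) * G) := by
  set Z := π / 2 * M with hZ
  have hMZ : M ≤ Z := by
    rw [hZ]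
    nlinarith [Real.pi_gt_three]
  have hZ0 : 0 ≤ Z := hM.trans hMZ
  refine (Real.rpow_le_rpow hM hMZ hq.le).trans ?_
  have hG : 0 ≤ G := (Real.exp_pos _).le.trans h
  by_cases hc : Z ≤ 160 * L
  · have h1 := Real.rpow_le_rpow hZ0 hc hq.le
    rw [Real.mul_rpow (by norm_num) hL] at h1
    have : 0 ≤ (2 * q) ^ q * (Real.exp (-(80 * L)) * G) := by positivity
    linarith
  · push Not at hc
    refine (rpow_le_exp hq hZ0).trans ?_
    have h1 : Real.exp (Z / 2) ≤ Real.exp (-(80 * L)) * G := by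
      calc Real.exp (Z / 2) ≤ Real.exp (-(80 * L) + Z) := by
            apply Real.exp_le_exp.mpr; linarith
        _ = Real.exp (-(80 * L)) * Real.exp Z := Real.exp_add _ _
        _ ≤ _ := by gcongr
    have h2 : 0 ≤ (160 : ℝ) ^ q * L ^ q := by positivity
    have h3 : (2 * q) ^ q * Real.exp (Z / 2) ≤ (2 * q) ^ q * (Real.exp (-(80 * L)) * G) := by
      gcongr
    linarith

end Counting

/-- For every `p > 0` there is `C_p > 0` such that for every `N ≥ 2` and Haar-distributed `U`,
`𝔼[(max_{1 ≤ k ≤ N} |𝒩_{2πk/N} − k|)^{2p}] ≤ C_p (log N)^{2p}`. -/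
theorem max_deviation_moment_bound :
    ∀ p : ℝ, 0 < p → ∃ C : ℝ, 0 < C ∧ ∀ N : ℕ, 2 ≤ N →
      ∀ ℙ : Measure (Matrix.unitaryGroup (Fin N) ℂ),
        IsProbabilityMeasure ℙ → ℙ.IsHaarMeasure →
          ∫ U, maxDev N U ^ (2 * p) ∂ℙ ≤ C * Real.log N ^ (2 * p) := by
  intro p hp
  have hq : 0 < 2 * p := by linarith
  set q := 2 * p with hqdef
  refine ⟨160 ^ q + (2 * q) ^ q * 2 ^ q, by positivity, ?_⟩
  intro N hN μ h1 h2
  set L := Real.log N with hL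
  have hN0 : (0 : ℝ) < N := by
    have : 0 < N := by omega
    exact_mod_cast this
  have hLlog : Real.log 2 ≤ L := by
    apply Real.log_le_log (by norm_num)
    exact_mod_cast hN
  have hlog2 := Real.log_two_gt_d9
  have hL0 : 0 ≤ L := by linarith
  have hMnn : ∀ U, 0 ≤ maxDev N U := fun U => Real.iSup_nonneg fun _ => abs_nonneg _
  have hgi : Integrable (fun U : UG N => 160 ^ q * L ^ q +
      (2 * q) ^ q * (Real.exp (-(80 * L)) * Gf N U)) μ :=
    (integrable_const _).add (((integrable_Gf μ).const_mul _).const_mul _)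
  have hstep : ∫ U, maxDev N U ^ q ∂μ ≤ ∫ U : UG N, (160 ^ q * L ^ q +
      (2 * q) ^ q * (Real.exp (-(80 * L)) * Gf N U)) ∂μ := by
    apply integral_mono_of_nonneg
    · exact Eventually.of_forall fun U => Real.rpow_nonneg (hMnn U) q
    · exact hgi
    · filter_upwards [maxDev_le (by omega) μ] with U hU
      exact pointwise_bound hq (hMnn U) hL0 hU
  refine hstep.trans ?_
  rw [integral_add (integrable_const _) (((integrable_Gf μ).const_mul _).const_mul _),
    integral_const, probReal_univ, one_smul, integral_const_mul, integral_const_mul]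
  have hG := integral_Gf μ
  have hGb : Real.exp (-(80 * L)) * ∫ U, Gf N U ∂μ ≤ 1 := by
    have h3 : (N : ℝ) * (4 * Real.exp (30 * (1 + L))) ≤ Real.exp (80 * L) := by
      have e1 : (N : ℝ) = Real.exp L := (Real.exp_log hN0).symm
      have e2 : (4 : ℝ) = Real.exp (2 * Real.log 2) := by
        rw [two_mul, Real.exp_add, Real.exp_log (by norm_num)]; norm_num
      rw [e2, e1, ← Real.exp_add, ← Real.exp_add]
      apply Real.exp_le_exp.mpr
      linarith
    calc _ ≤ Real.exp (-(80 * L)) * Real.exp (80 * L) := by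
          gcongr
          exact hG.trans h3
      _ = 1 := by rw [← Real.exp_add]; simp
  have h2L : 1 ≤ 2 ^ q * L ^ q := by
    rw [← Real.mul_rpow (by norm_num) hL0]
    exact Real.one_le_rpow (by linarith) hq.le
  have hpos : 0 ≤ (2 * q) ^ q := by positivity
  have h5 := mul_le_mul_of_nonneg_left (hGb.trans h2L) hpos
  linarith
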